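/- arXiv:2512.16894 — 2 statements merged into one kernel-verified Lean document; each statement's English description precedes it below -/
import Mathlib

section
/- Let γ > 0 and let Θ be a σ-finite Borel measure on the space ℝ≥0^ℕ of nonnegative sequences. Let Ξ^H be the pushforward of the product measure ν_{−γ} ⊗ Θ under the map (y₁, y) ↦ (1, y₁, y₁·y), a measure on ℝ≥0 × (0,1) × ℝ≥0^ℕ. For x > 0 define G^H_x(1, y₁, z) := ( 1, m_{1/x}(y₁), (m_{1/x}(y₁)/y₁)·z ) for y₁ ∈ (0,1). Then: (i) for every x > 0, the pushforward of Ξ^H under G^H_x equals x^{−γ}·Ξ^H; (ii) for every point (1, y₁, z) with y₁ ∈ (0,1), the map x ↦ x·G^H_x(1, y₁, z) is coordinate-wise nondecreasing on (0, ∞); in particular x·G^H_x(1, y₁, z) ≤ (1, y₁, z) coordinate-wise for x ∈ (0,1]. -/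
open MeasureTheory Set

/-- The magic function `m_x(y) = x·y/(x·y + (1 − y))`. -/
noncomputable def magic (x y : ℝ) : ℝ := x * y / (x * y + (1 - y))

/-- The measure `ν_γ` on `[0,1)` with density `y^{γ−1}·(1 − y)^{−1−γ}`. -/
noncomputable def nuGamma (γ : ℝ) : Measure ℝ :=
  (volume.restrict (Ico 0 1)).withDensity fun y =>
    ENNReal.ofReal (y ^ (γ - 1) * (1 - y) ^ (-1 - γ))

lemma magic_denom_pos {x y : ℝ} (hx : 0 < x) (hy : y ∈ Ioo (0:ℝ) 1) :
    0 < x * y + (1 - y) := by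
  have := mul_pos hx hy.1
  linarith [hy.2]

lemma magic_mem {x y : ℝ} (hx : 0 < x) (hy : y ∈ Ioo (0:ℝ) 1) :
    magic x y ∈ Ioo (0:ℝ) 1 := by
  have hD := magic_denom_pos hx hy
  unfold magic
  refine ⟨div_pos (mul_pos hx hy.1) hD, ?_⟩
  rw [div_lt_one hD]
  linarith [hy.2]

lemma one_sub_magic {x y : ℝ} (hx : 0 < x) (hy : y ∈ Ioo (0:ℝ) 1) :
    1 - magic x y = (1 - y) / (x * y + (1 - y)) := by
  have hD := magic_denom_pos hx hy
  unfold magic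
  rw [eq_div_iff hD.ne', sub_mul, div_mul_cancel₀ _ hD.ne']
  ring

lemma magic_magic {x w y : ℝ} (hx : 0 < x) (hw : 0 < w) (h : w * x = 1)
    (hy : y ∈ Ioo (0:ℝ) 1) : magic w (magic x y) = y := by
  have hD := magic_denom_pos hx hy
  have e : w * magic x y + (1 - magic x y) = 1 / (x * y + (1 - y)) := by
    rw [one_sub_magic hx hy]
    unfold magic
    field_simp
    linear_combination y * h
  have e2 : magic w (magic x y) = w * magic x y / (w * magic x y + (1 - magic x y)) := rfl
  rw [e2, e]
  unfold magic
  field_simp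
  linear_combination y * h

lemma magic_hasDerivAt {x y : ℝ} (hx : 0 < x) (hy : y ∈ Ioo (0:ℝ) 1) :
    HasDerivAt (magic x) (x / (x * y + (1 - y)) ^ 2) y := by
  have hD := magic_denom_pos hx hy
  have h1 : HasDerivAt (fun y : ℝ => x * y) x y := by
    simpa using (hasDerivAt_id y).const_mul x
  have h2 : HasDerivAt (fun y : ℝ => x * y + (1 - y)) (x + (-1)) y :=
    h1.add ((hasDerivAt_id y).const_sub 1)
  have h3 := h1.div h2 hD.ne'
  have h4 : (x * (x * y + (1 - y)) - x * y * (x + -1)) / (x * y + (1 - y)) ^ 2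
      = x / (x * y + (1 - y)) ^ 2 := by congr 1; ring
  rw [h4] at h3
  exact h3

lemma magic_measurable (x : ℝ) : Measurable (magic x) := by
  unfold magic
  fun_prop

lemma density_change {γ x y : ℝ} (hx : 0 < x) (hy : y ∈ Ioo (0:ℝ) 1) :
    x / (x * y + (1 - y)) ^ 2 *
      ((magic x y) ^ (-γ - 1) * (1 - magic x y) ^ (-1 - -γ)) =
    x ^ (-γ) * (y ^ (-γ - 1) * (1 - y) ^ (-1 - -γ)) := by
  have hD := magic_denom_pos hx hy
  have h1 : 0 < 1 - y := by linarith [hy.2]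
  rw [one_sub_magic hx hy]
  unfold magic
  set D := x * y + (1 - y) with hDdef
  rw [Real.div_rpow (mul_pos hx hy.1).le hD.le, Real.div_rpow h1.le hD.le,
    Real.mul_rpow hx.le hy.1.le]
  have ex : x ^ (-γ) = x ^ (-γ - 1) * x := by
    rw [← Real.rpow_add_one hx.ne']; congr 1; ring
  have eD : D ^ (-γ - 1) * D ^ (-1 - -γ) * D ^ 2 = 1 := by
    rw [← Real.rpow_natCast D 2, ← Real.rpow_add hD, ← Real.rpow_add hD]
    convert Real.rpow_zero D using 2
    push_cast; ring
  have p1 : D ^ (-γ - 1) ≠ 0 := (Real.rpow_pos_of_pos hD _).ne'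
  have p2 : D ^ (-1 - -γ) ≠ 0 := (Real.rpow_pos_of_pos hD _).ne'
  have : x / D ^ 2 * (x ^ (-γ - 1) * y ^ (-γ - 1) / D ^ (-γ - 1) *
      ((1 - y) ^ (-1 - -γ) / D ^ (-1 - -γ))) =
      (x ^ (-γ - 1) * x * (y ^ (-γ - 1) * (1 - y) ^ (-1 - -γ))) /
        (D ^ (-γ - 1) * D ^ (-1 - -γ) * D ^ 2) := by
    rw [div_mul_div_comm, div_mul_div_comm]
    congr 1 <;> ring
  rw [this, eD, ex, div_one]

lemma nuGamma_eq (γ : ℝ) : nuGamma γ = (volume.restrict (Ioo 0 1)).withDensity fun y =>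
    ENNReal.ofReal (y ^ (γ - 1) * (1 - y) ^ (-1 - γ)) := by
  unfold nuGamma
  rw [Measure.restrict_congr_set Ioo_ae_eq_Ico]

instance nuGamma_sFinite (γ : ℝ) : SFinite (nuGamma γ) := by
  unfold nuGamma
  infer_instance

lemma nuGamma_apply (γ : ℝ) {A : Set ℝ} (hA : MeasurableSet A) :
    nuGamma γ A = ∫⁻ y in A ∩ Ioo 0 1,
      ENNReal.ofReal (y ^ (γ - 1) * (1 - y) ^ (-1 - γ)) := by
  rw [nuGamma_eq, withDensity_apply _ hA, Measure.restrict_restrict hA]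

lemma map_magic_nuGamma (γ : ℝ) {x : ℝ} (hx : 0 < x) :
    Measure.map (magic (1 / x)) (nuGamma (-γ)) =
      ENNReal.ofReal (x ^ (-γ)) • nuGamma (-γ) := by
  have hw : 0 < 1 / x := by positivity
  have hwx : 1 / x * x = 1 := by field_simp
  have hxw : x * (1 / x) = 1 := by field_simp
  ext A hA
  have hmA := magic_measurable (1 / x) hA
  rw [Measure.map_apply (magic_measurable _) hA, Measure.smul_apply, nuGamma_apply _ hA,
    nuGamma_apply _ hmA]
  have himg : magic (1 / x) ⁻¹' A ∩ Ioo 0 1 = magic x '' (A ∩ Ioo 0 1) := by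
    ext y
    constructor
    · rintro ⟨h1, h2⟩
      exact ⟨magic (1 / x) y, ⟨h1, magic_mem hw h2⟩, magic_magic hw hx hxw h2⟩
    · rintro ⟨v, ⟨h1, h2⟩, rfl⟩
      refine ⟨?_, magic_mem hx h2⟩
      rw [mem_preimage, magic_magic hx hw hwx h2]
      exact h1
  have hinj : InjOn (magic x) (A ∩ Ioo 0 1) := by
    intro a ha b hb hab
    rw [← magic_magic hx hw hwx ha.2, hab, magic_magic hx hw hwx hb.2]
  have hms : MeasurableSet (A ∩ Ioo (0:ℝ) 1) := hA.inter measurableSet_Ioo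
  rw [himg, lintegral_image_eq_lintegral_abs_deriv_mul hms
    (fun y hy => (magic_hasDerivAt hx hy.2).hasDerivWithinAt) hinj, smul_eq_mul,
    ← lintegral_const_mul' _ _ ENNReal.ofReal_ne_top]
  refine setLIntegral_congr_fun hms fun y hy => ?_
  have hD := magic_denom_pos hx hy.2
  rw [abs_of_pos (by positivity), ← ENNReal.ofReal_mul (by positivity),
    ← ENNReal.ofReal_mul (by positivity), density_change hx hy.2]

lemma mul_magic_inv {x y : ℝ} (hx : 0 < x) (hy : y ∈ Ioo (0:ℝ) 1) :
    x * magic (1 / x) y = x * y / (y + x * (1 - y)) := by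
  have hw : 0 < 1 / x := by positivity
  have hD := magic_denom_pos hw hy
  have h2 : 0 < y + x * (1 - y) := by
    have := mul_pos hx (sub_pos.2 hy.2)
    linarith [hy.1]
  have e : 1 / x * y + (1 - y) = (y + x * (1 - y)) / x := by field_simp
  unfold magic
  rw [e]
  field_simp

lemma mul_magic_mono {y : ℝ} (hy : y ∈ Ioo (0:ℝ) 1) :
    MonotoneOn (fun x : ℝ => x * magic (1 / x) y) (Ioi 0) := by
  intro a ha b hb hab
  have ha : 0 < a := ha
  have hb : 0 < b := hb
  simp only
  rw [mul_magic_inv ha hy, mul_magic_inv hb hy]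
  have h1 := sub_pos.2 hy.2
  have h0 := hy.1
  rw [div_le_div_iff₀ (by positivity) (by positivity)]
  nlinarith [mul_le_mul_of_nonneg_right hab (mul_pos h0 h0).le]

lemma magic_one (y : ℝ) : magic 1 y = y := by
  unfold magic; simp

/-- **Splitting measures of height form `H_γ` are `G^H`-growing (quasi-preservation and
monotonicity).**  Let `γ > 0`, `Θ` a σ-finite measure on nonnegative sequences, and
`Ξ^H` the pushforward of `ν_{−γ} ⊗ Θ` under `(y₁, y) ↦ (1, y₁, y₁·y)`.  With
`G^H_x(1, y₁, z) = (1, m_{1/x}(y₁), (m_{1/x}(y₁)/y₁)·z)` (and `G^H_x` measurable):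
(i) `(G^H_x)_♯ Ξ^H = x^{−γ}·Ξ^H` for every `x > 0`; (ii) `x ↦ x·G^H_x(1, y₁, z)` is
coordinate-wise nondecreasing on `(0,∞)`, and `x·G^H_x(1, y₁, z) ≤ (1, y₁, z)` for
`x ∈ (0,1]`. -/
theorem heightForm_is_GH_growing (γ : ℝ) (hγ : 0 < γ)
    (Θ : Measure (ℕ → ℝ)) [SigmaFinite Θ]
    (hΘ : Θ {z : ℕ → ℝ | ¬ ∀ i, 0 ≤ z i} = 0)
    (ΞH : Measure (ℝ × ℝ × (ℕ → ℝ)))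
    (hΞH : ΞH = Measure.map
      (fun p : ℝ × (ℕ → ℝ) => ((1:ℝ), p.1, fun i => p.1 * p.2 i))
      ((nuGamma (-γ)).prod Θ))
    (GH : ℝ → ℝ × ℝ × (ℕ → ℝ) → ℝ × ℝ × (ℕ → ℝ))
    (hGHmeas : ∀ x : ℝ, 0 < x → Measurable (GH x))
    (hGH : ∀ x : ℝ, ∀ y₁ : ℝ, ∀ z : ℕ → ℝ,
      GH x (1, y₁, z) = (1, magic (1 / x) y₁, fun i => (magic (1 / x) y₁ / y₁) * z i)) :
    (∀ x > (0:ℝ), Measure.map (GH x) ΞH = ENNReal.ofReal (x ^ (-γ)) • ΞH) ∧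
    (∀ y₁ ∈ Ioo (0:ℝ) 1, ∀ z : ℕ → ℝ, (∀ i, 0 ≤ z i) →
      (MonotoneOn (fun x : ℝ => x * (GH x (1, y₁, z)).1) (Ioi 0) ∧
        MonotoneOn (fun x : ℝ => x * (GH x (1, y₁, z)).2.1) (Ioi 0) ∧
        ∀ i, MonotoneOn (fun x : ℝ => x * (GH x (1, y₁, z)).2.2 i) (Ioi 0)) ∧
      (∀ x ∈ Ioc (0:ℝ) 1,
        x * (GH x (1, y₁, z)).1 ≤ 1 ∧ x * (GH x (1, y₁, z)).2.1 ≤ y₁ ∧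
          ∀ i, x * (GH x (1, y₁, z)).2.2 i ≤ z i)) := by
  refine ⟨fun x hx => ?_, fun y hy z hz => ⟨⟨?_, ?_, fun i => ?_⟩, fun x hx => ⟨?_, ?_, fun i => ?_⟩⟩⟩
  · have hF : Measurable (fun p : ℝ × (ℕ → ℝ) =>
        ((1:ℝ), p.1, fun i => p.1 * p.2 i)) := by fun_prop
    have hm := magic_measurable (1 / x)
    have hpm : Measurable (Prod.map (magic (1 / x)) (id : (ℕ → ℝ) → (ℕ → ℝ))) :=
      hm.prodMap measurable_id
    have h0 : ∀ᵐ y ∂(nuGamma (-γ)), y ≠ 0 := by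
      rw [ae_iff]
      have : {a : ℝ | ¬ a ≠ 0} = {0} := by ext; simp
      rw [this, nuGamma_apply _ (measurableSet_singleton 0)]
      have : ({0} : Set ℝ) ∩ Ioo 0 1 = ∅ := by ext a; simp
      rw [this]; simp
    have h0' : ∀ᵐ p ∂((nuGamma (-γ)).prod Θ), p.1 ≠ 0 :=
      Measure.quasiMeasurePreserving_fst.ae h0
    rw [hΞH, Measure.map_map (hGHmeas x hx) hF, ← Measure.map_smul]
    have hs : ENNReal.ofReal (x ^ (-γ)) • ((nuGamma (-γ)).prod Θ) =
        Measure.map (Prod.map (magic (1 / x)) id) ((nuGamma (-γ)).prod Θ) := by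
      rw [← Measure.map_prod_map _ _ hm measurable_id, map_magic_nuGamma γ hx, Measure.map_id,
        Measure.prod_smul_left]
    rw [hs, Measure.map_map hF hpm]
    refine Measure.map_congr ?_
    filter_upwards [h0'] with p hp
    simp only [Function.comp, hGH, Prod.map, id]
    congr 2
    funext i
    field_simp
  · simp only [hGH, mul_one]
    exact fun a _ b _ h => h
  · simp only [hGH]
    exact mul_magic_mono hy
  · simp only [hGH]
    intro a ha b hb hab
    have h := mul_magic_mono hy ha hb hab
    simp only at h ⊢
    have hc : 0 ≤ z i / y := div_nonneg (hz i) hy.1.le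
    calc _ = a * magic (1 / a) y * (z i / y) := by ring
      _ ≤ b * magic (1 / b) y * (z i / y) := mul_le_mul_of_nonneg_right h hc
      _ = _ := by ring
  · simp only [hGH, mul_one]
    exact hx.2
  · simp only [hGH]
    simpa [magic_one] using mul_magic_mono hy (mem_Ioi.2 hx.1) (mem_Ioi.2 one_pos) hx.2
  · simp only [hGH]
    have h : x * magic (1 / x) y ≤ y := by
      simpa [magic_one] using mul_magic_mono hy (mem_Ioi.2 hx.1) (mem_Ioi.2 one_pos) hx.2
    have hc : 0 ≤ z i / y := div_nonneg (hz i) hy.1.le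
    have hy0 := hy.1.ne'
    calc _ = x * magic (1 / x) y * (z i / y) := by ring
      _ ≤ y * (z i / y) := mul_le_mul_of_nonneg_right h hc
      _ = _ := by field_simp
end

section
/- For every s ∈ [1/2, 1), the maps x ↦ x·𝚏_x(s) and x ↦ x·(1 − 𝚏_x(s)) are nondecreasing on (0, ∞). In particular, for every x ∈ (0,1] and s ∈ [1/2, 1): x·𝚏_x(s) ≤ s and x·(1 − 𝚏_x(s)) ≤ 1 − s. -/
open Set

/-- `h(s) = (1 − 2s)²/(s(1 − s))`. -/
noncomputable def hBro (s : ℝ) : ℝ := (1 - 2 * s) ^ 2 / (s * (1 - s))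

/-- The locally largest growing family of the Brownian CRT (by mass):
`𝚏_x(s) = (1/2)(1 + √(h(s)/(4x⁻¹ + h(s))))`. -/
noncomputable def fBro (x s : ℝ) : ℝ :=
  (1 / 2) * (1 + Real.sqrt (hBro s / (4 * x⁻¹ + hBro s)))

lemma hBro_nonneg {s : ℝ} (hs : s ∈ Ico ((1:ℝ)/2) 1) : 0 ≤ hBro s := by
  have h1 : (1:ℝ)/2 ≤ s := hs.1
  have h2 : s < 1 := hs.2
  exact div_nonneg (sq_nonneg _) (mul_nonneg (by linarith) (by linarith))

lemma aux_mono {h x y : ℝ} (hh : 0 ≤ h) (hx : 0 < x) (hxy : x ≤ y) :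
    Real.sqrt (h / (4 * x⁻¹ + h)) ≤ Real.sqrt (h / (4 * y⁻¹ + h)) := by
  have hy : 0 < y := hx.trans_le hxy
  apply Real.sqrt_le_sqrt
  gcongr

lemma aux_sq {h x : ℝ} (hh : 0 ≤ h) (hx : 0 < x) :
    Real.sqrt (h / (4 * x⁻¹ + h)) ^ 2 * (4 + h * x) = h * x := by
  rw [Real.sq_sqrt (by positivity)]
  have : 4 + h * x ≠ 0 := by positivity
  have e : 4 * x⁻¹ + h = (4 + h * x) / x := by field_simp
  rw [e]
  field_simp

lemma aux_mono2 {h x y : ℝ} (hh : 0 ≤ h) (hx : 0 < x) (hxy : x ≤ y) :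
    x * (1 - Real.sqrt (h / (4 * x⁻¹ + h))) ≤ y * (1 - Real.sqrt (h / (4 * y⁻¹ + h))) := by
  have hy : 0 < y := hx.trans_le hxy
  rcases hh.eq_or_lt with h0 | h0
  · subst h0; simpa using hxy
  have hm := aux_mono hh hx hxy
  have e1 := aux_sq hh hx
  have e2 := aux_sq hh hy
  have r0 := Real.sqrt_nonneg (h / (4 * x⁻¹ + h))
  set r := Real.sqrt (h / (4 * x⁻¹ + h))
  set q := Real.sqrt (h / (4 * y⁻¹ + h))
  have q0 : 0 ≤ q := r0.trans hm
  have f1 : h * (x * (1 - r)) = 4 * r ^ 2 / (1 + r) := by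
    rw [eq_div_iff (by positivity)]; linarith
  have f2 : h * (y * (1 - q)) = 4 * q ^ 2 / (1 + q) := by
    rw [eq_div_iff (by positivity)]; linarith
  refine le_of_mul_le_mul_left ?_ h0
  rw [f1, f2, div_le_div_iff₀ (by positivity) (by positivity)]
  have a : r ^ 2 ≤ q ^ 2 := by gcongr
  have b : r * q * r ≤ r * q * q := by gcongr
  nlinarith

lemma fBro_one {s : ℝ} (hs : s ∈ Ico ((1:ℝ)/2) 1) : fBro 1 s = s := by
  have h1 : (1:ℝ)/2 ≤ s := hs.1
  have h2 : s < 1 := hs.2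
  have h3 : s ≠ 0 := by linarith
  have h4 : 1 - s ≠ 0 := by linarith
  have e4 : 4 * (1:ℝ)⁻¹ + hBro s = 1 / (s * (1 - s)) := by
    unfold hBro; field_simp; ring
  have e : hBro s / (4 * (1:ℝ)⁻¹ + hBro s) = (2 * s - 1) ^ 2 := by
    rw [e4]; unfold hBro; field_simp; ring
  unfold fBro
  rw [e, Real.sqrt_sq (by linarith)]
  ring

/-- **Monotone coupling (growing) property of the Brownian CRT family.**  For every
`s ∈ [1/2, 1)` the maps `x ↦ x·𝚏_x(s)` and `x ↦ x·(1 − 𝚏_x(s))` are nondecreasing on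
`(0,∞)`; in particular `x·𝚏_x(s) ≤ s` and `x·(1 − 𝚏_x(s)) ≤ 1 − s` for `x ∈ (0,1]`. -/
theorem fBro_monotone :
    (∀ s ∈ Ico ((1:ℝ)/2) 1,
      MonotoneOn (fun x => x * fBro x s) (Ioi 0) ∧
      MonotoneOn (fun x => x * (1 - fBro x s)) (Ioi 0)) ∧
    (∀ x ∈ Ioc (0:ℝ) 1, ∀ s ∈ Ico ((1:ℝ)/2) 1,
      x * fBro x s ≤ s ∧ x * (1 - fBro x s) ≤ 1 - s) := by
  have key : ∀ s ∈ Ico ((1:ℝ)/2) 1,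
      MonotoneOn (fun x => x * fBro x s) (Ioi 0) ∧
      MonotoneOn (fun x => x * (1 - fBro x s)) (Ioi 0) := by
    intro s hs
    have hh := hBro_nonneg hs
    refine ⟨fun x hx y _ hxy => ?_, fun x hx y _ hxy => ?_⟩
    · have hx : 0 < x := hx
      have hm := aux_mono hh hx hxy
      have hy : 0 < y := hx.trans_le hxy
      simp only [fBro]
      gcongr
    · have := aux_mono2 hh hx hxy
      simp only [fBro]
      linarith
  refine ⟨key, fun x hx s hs => ?_⟩
  have h1 := (key s hs).1 hx.1 (Set.mem_Ioi.mpr (one_pos : (0:ℝ) < 1)) hx.2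
  have h2 := (key s hs).2 hx.1 (Set.mem_Ioi.mpr (one_pos : (0:ℝ) < 1)) hx.2
  simp only [fBro_one hs, one_mul] at h1 h2
  exact ⟨h1, h2⟩
end
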